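/- Fix α_p > 0, σ_μ ≥ 0, γ > 0, σ_ε > 0. There exists A > 0 such that for every α_x > A, setting α_z = α_x²/(γ²·σ_ε²), α = α_x + α_p + α_z and α_ψ = α²/(α_x + α_p²·σ_μ²), there exist Z ∈ ℝ, x_c ∈ ℝ and m ∈ ℝ such that the equation Φ(√α_ψ·(((α_z + α_p)/α)·θ − (α_z/α)·Z − (α_p/α)·m − x_c/√α)) = θ has at least three distinct solutions θ in (0,1). -/

import Mathlib

/-- The standard normal cumulative distribution function. -/
noncomputable def stdNormalCDF (x : ℝ) : ℝ :=
  ∫ t in Set.Iic x, (Real.sqrt (2 * Real.pi))⁻¹ * Real.exp (-t ^ 2 / 2)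

open MeasureTheory ProbabilityTheory Filter Topology in
lemma Phi_eq_cdf (x : ℝ) : stdNormalCDF x = cdf (gaussianReal 0 1) x := by
  rw [cdf_eq_real, Measure.real, gaussianReal_apply_eq_integral 0 one_ne_zero,
    ENNReal.toReal_ofReal (integral_nonneg fun t => gaussianPDFReal_nonneg 0 1 t)]
  unfold stdNormalCDF
  congr 1
  ext t
  simp [gaussianPDFReal]

open MeasureTheory ProbabilityTheory in
lemma Phi_sub (x y : ℝ) : stdNormalCDF y - stdNormalCDF x
    = ∫ t in x..y, gaussianPDFReal 0 1 t := by
  have h : ∀ z, stdNormalCDF z = ∫ t in Set.Iic z, gaussianPDFReal 0 1 t := by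
    intro z
    unfold stdNormalCDF
    congr 1
    ext t
    simp [gaussianPDFReal]
  rw [h, h]
  exact intervalIntegral.integral_Iic_sub_Iic (integrable_gaussianPDFReal 0 1).integrableOn
    (integrable_gaussianPDFReal 0 1).integrableOn

open MeasureTheory ProbabilityTheory in
lemma Phi_cont : Continuous stdNormalCDF := by
  have h : stdNormalCDF = fun x => stdNormalCDF 0 + ∫ t in (0:ℝ)..x, gaussianPDFReal 0 1 t := by
    ext x
    rw [← Phi_sub]
    ring
  rw [h]
  exact continuous_const.add (intervalIntegral.continuous_primitive
    (fun a b => (integrable_gaussianPDFReal 0 1).intervalIntegrable) 0)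

open MeasureTheory ProbabilityTheory in
lemma Phi_strictMono : StrictMono stdNormalCDF := by
  intro x y hxy
  rw [← sub_pos, Phi_sub]
  exact intervalIntegral.intervalIntegral_pos_of_pos
    (integrable_gaussianPDFReal 0 1).intervalIntegrable
    (fun t => gaussianPDFReal_pos 0 1 t one_ne_zero) hxy

lemma Phi_pos (x : ℝ) : 0 < stdNormalCDF x := by
  refine lt_of_le_of_lt ?_ (Phi_strictMono (sub_one_lt x))
  rw [Phi_eq_cdf]
  exact ProbabilityTheory.cdf_nonneg _ _

lemma Phi_lt_one (x : ℝ) : stdNormalCDF x < 1 := by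
  refine lt_of_lt_of_le (Phi_strictMono (lt_add_one x)) ?_
  rw [Phi_eq_cdf]
  exact ProbabilityTheory.cdf_le_one _ _

open ProbabilityTheory Filter Topology in
lemma Phi_three : ∃ B > (0:ℝ), ∀ K ≥ B, ∃ θ₁ θ₂ θ₃ : ℝ,
    0 < θ₁ ∧ θ₁ < θ₂ ∧ θ₂ < θ₃ ∧ θ₃ < 1 ∧
    stdNormalCDF (K * (θ₁ - stdNormalCDF 0)) = θ₁ ∧
    stdNormalCDF (K * (θ₂ - stdNormalCDF 0)) = θ₂ ∧
    stdNormalCDF (K * (θ₃ - stdNormalCDF 0)) = θ₃ := by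
  have e : stdNormalCDF = cdf (gaussianReal 0 1) := funext Phi_eq_cdf
  have h0 := Phi_pos 0
  have h1 := Phi_lt_one 0
  obtain ⟨c, hc2⟩ : ∃ c, stdNormalCDF 0 = c := ⟨_, rfl⟩
  rw [hc2] at h0 h1 ⊢
  have tb : Tendsto (fun K : ℝ => stdNormalCDF (K * (c / 2 - c))) atTop (𝓝 0) := by
    rw [e]
    exact (tendsto_cdf_atBot _).comp (tendsto_id.atTop_mul_const_of_neg (by linarith))
  have tt : Tendsto (fun K : ℝ => stdNormalCDF (K * ((1 + c) / 2 - c))) atTop (𝓝 1) := by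
    rw [e]
    exact (tendsto_cdf_atTop _).comp (tendsto_id.atTop_mul_const (by linarith))
  have ev := (tb.eventually (gt_mem_nhds (show (0:ℝ) < c / 2 by linarith))).and
    (tt.eventually (lt_mem_nhds (show (1 + c) / 2 < 1 by linarith)))
  obtain ⟨B, hB⟩ := eventually_atTop.1 ev
  refine ⟨max B 1, by positivity, fun K hK => ?_⟩
  obtain ⟨hb, ht⟩ := hB K (le_trans (le_max_left _ _) hK)
  have hcont : Continuous (fun θ => stdNormalCDF (K * (θ - c)) - θ) :=
    (Phi_cont.comp (by fun_prop)).sub continuous_id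
  obtain ⟨a, ha, ha'⟩ := intermediate_value_Ioo' (show (0:ℝ) ≤ c / 2 by linarith)
    hcont.continuousOn (show (0:ℝ) ∈ Set.Ioo _ _ from
      ⟨by simpa using hb, by simpa using Phi_pos _⟩)
  obtain ⟨b, hbm, hb'⟩ := intermediate_value_Ioo' (show (1 + c) / 2 ≤ 1 by linarith)
    hcont.continuousOn (show (0:ℝ) ∈ Set.Ioo _ _ from
      ⟨by simpa using Phi_lt_one _, by simpa using ht⟩)
  refine ⟨a, c, b, ha.1, by linarith [ha.2], by linarith [hbm.1], hbm.2,
    sub_eq_zero.1 ha', by simpa using hc2, sub_eq_zero.1 hb'⟩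

theorem stmt_9 (αp σμ γ σε : ℝ) (hαp : 0 < αp) (hσμ : 0 ≤ σμ) (hγ : 0 < γ)
    (hσε : 0 < σε) :
    ∃ A > (0 : ℝ), ∀ αx > A,
      ∀ αz α αψ : ℝ, αz = αx ^ 2 / (γ ^ 2 * σε ^ 2) → α = αx + αp + αz →
        αψ = α ^ 2 / (αx + αp ^ 2 * σμ ^ 2) →
        ∃ Z xc m : ℝ, ∃ θ₁ θ₂ θ₃ : ℝ,
          θ₁ ∈ Set.Ioo (0 : ℝ) 1 ∧ θ₂ ∈ Set.Ioo (0 : ℝ) 1 ∧ θ₃ ∈ Set.Ioo (0 : ℝ) 1 ∧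
          θ₁ ≠ θ₂ ∧ θ₁ ≠ θ₃ ∧ θ₂ ≠ θ₃ ∧
          stdNormalCDF (Real.sqrt αψ *
            (((αz + αp) / α) * θ₁ - (αz / α) * Z - (αp / α) * m - xc / Real.sqrt α)) = θ₁ ∧
          stdNormalCDF (Real.sqrt αψ *
            (((αz + αp) / α) * θ₂ - (αz / α) * Z - (αp / α) * m - xc / Real.sqrt α)) = θ₂ ∧
          stdNormalCDF (Real.sqrt αψ *
            (((αz + αp) / α) * θ₃ - (αz / α) * Z - (αp / α) * m - xc / Real.sqrt α)) = θ₃ := by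
  obtain ⟨B, hB, H⟩ := Phi_three
  have hs : 0 ≤ αp ^ 2 * σμ ^ 2 := by positivity
  have hg : 0 < γ ^ 2 * σε ^ 2 := by positivity
  generalize αp ^ 2 * σμ ^ 2 = s at hs ⊢
  generalize γ ^ 2 * σε ^ 2 = g at hg ⊢
  refine ⟨1 + s + 2 * g * B, by positivity, ?_⟩
  intro αx hx αz α αψ hz hα hψ
  have hgB : 0 < 2 * g * B := by positivity
  have hx0 : 0 < αx := by linarith
  have hz0 : 0 < αz := by rw [hz]; positivity
  have hα0 : 0 < α := by rw [hα]; positivity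
  have hsq : Real.sqrt αψ = α / Real.sqrt (αx + s) := by
    rw [hψ, Real.sqrt_div (sq_nonneg α), Real.sqrt_sq hα0.le]
  have hr0 : 0 < Real.sqrt (αx + s) := Real.sqrt_pos.2 (by linarith)
  have hr1 : Real.sqrt (αx + s) ≤ 2 * αx := by
    rw [Real.sqrt_le_left (by linarith)]
    nlinarith
  have hK : (αz + αp) / Real.sqrt (αx + s) ≥ B := by
    rw [ge_iff_le, le_div_iff₀ hr0]
    have : B * (2 * αx) ≤ αz := by
      rw [hz, le_div_iff₀ hg]
      nlinarith
    have := mul_le_mul_of_nonneg_left hr1 hB.le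
    linarith
  obtain ⟨a, b, c, h0, h1, h2, h3, ea, eb, ec⟩ := H _ hK
  have key : ∀ θ, Real.sqrt αψ * (((αz + αp) / α) * θ
      - (αz / α) * ((αz + αp) / αz * stdNormalCDF 0) - (αp / α) * 0 - 0 / Real.sqrt α)
      = (αz + αp) / Real.sqrt (αx + s) * (θ - stdNormalCDF 0) := by
    intro θ
    rw [hsq]
    field_simp
    ring
  refine ⟨(αz + αp) / αz * stdNormalCDF 0, 0, 0, a, b, c, ⟨h0, by linarith⟩,
    ⟨by linarith, by linarith⟩, ⟨by linarith, h3⟩, h1.ne, (h1.trans h2).ne, h2.ne, ?_, ?_, ?_⟩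
  · rw [key, ea]
  · rw [key, eb]
  · rw [key, ec]
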